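/- arXiv:2502.04146 — 2 statements merged into one kernel-verified Lean document; each statement's English description precedes it below -/
import Mathlib

section
/- Let (U, φ) be a finite standard closure space with modular closure lattice, and let C be a non-join-irreducible essential closed set with predecessors C_1, …, C_m and C_* = ⋂_{i=1}^m C_i. Then for every quasi-closed set Q spanning C, the closure of Q under the E-base equals Q ∪ {x ∈ C : C_i \ C_* = {x} for some i}. -/
/-!
Write `C = φ Q` and `C_*` for the intersection of the predecessors of `C`. By modularity and
standardness, `φ {p} \ {p} ⊆ C_*` for every `p ∈ C`, so adjoining one point of `C` to a closed
set between `C_*` and `C` moves up by at most one cover. Since `C` is not join-irreducible, every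
closed subset of `Q ≠ C` lies in a predecessor of `C` that is still contained in `Q`. Two such
predecessors exist, and modularity then forces every `x ∈ C \ Q` to sit in a chain of covers
`C_* ≺ K ≺ C` with `K = φ (C_* ∪ {x})`, where `K \ C_*` misses `Q`.

A D-generator of `x` inside `C` that does not span `C` must contain a point of `K \ C_*` other than
`x`. If `K \ C_* = {x}`, there is none, so the D-generators of `x` contained in `Q` are
E-generators. Otherwise a second point of `K \ C_*` produces a D-generator inside `K`, the
E-generators of `x` inside `C` do not span `C`, and each of them needs a point that the right-hand
side does not contain.
-/

namespace EBaseFormal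

open Set

variable {α : Type*}

/-- `φ` is a closure operator on subsets of `α`. -/
def IsClosureOp (φ : Set α → Set α) : Prop :=
  (∀ X, X ⊆ φ X) ∧ (∀ X, φ (φ X) = φ X) ∧ ∀ X Y : Set α, X ⊆ Y → φ X ⊆ φ Y

/-- `C` is a closed set of the closure space. -/
def IsClosedSet (φ : Set α → Set α) (C : Set α) : Prop :=
  φ C = C

/-- The closure space is standard: `φ {x} \ {x}` is closed for every `x`. -/
def IsStandard (φ : Set α → Set α) : Prop :=
  ∀ x : α, IsClosedSet φ (φ {x} \ {x})

/-- The binary part `φ^b` of the closure operator. -/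
def binPart (φ : Set α → Set α) (X : Set α) : Set α :=
  ⋃ x ∈ X, φ {x}

/-- `A` is a D-generator of `x`. -/
def IsDGen (φ : Set α → Set α) (x : α) (A : Set α) : Prop :=
  x ∈ φ A ∧ x ∉ binPart φ A ∧ ∀ B : Set α, binPart φ B ⊂ binPart φ A → x ∉ φ B

/-- `A` is an E-generator of `x`: a D-generator whose closure is inclusion-minimal
among the closures of D-generators of `x`. -/
def IsEGen (φ : Set α → Set α) (x : α) (A : Set α) : Prop :=
  IsDGen φ x A ∧ ∀ B : Set α, IsDGen φ x B → φ B ⊆ φ A → φ B = φ A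

/-- The E-base of the closure space: all valid nontrivial binary implications
together with the implications `A → {x}` for `A` an E-generator of `x`. -/
def EBase (φ : Set α → Set α) : Set (Set α × Set α) :=
  {p | ∃ a x : α, p = ({a}, {x}) ∧ x ∈ φ {a} ∧ x ≠ a} ∪
    {p | ∃ (x : α) (A : Set α), p = (A, {x}) ∧ IsEGen φ x A}

/-- `Y` satisfies all implications of `S`. -/
def ImpClosedSet (S : Set (Set α × Set α)) (Y : Set α) : Prop :=
  ∀ p ∈ S, p.1 ⊆ Y → p.2 ⊆ Y

/-- The closure of `Z` under the implications in `S`: the smallest set containing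
`Z` satisfying all implications of `S`. -/
def ImpClosure (S : Set (Set α × Set α)) (Z : Set α) : Set α :=
  ⋂₀ {Y : Set α | Z ⊆ Y ∧ ImpClosedSet S Y}

/-- The E-base is valid: its induced closure operator is `φ`. -/
def EBaseValid (φ : Set α → Set α) : Prop :=
  ∀ Z : Set α, ImpClosure (EBase φ) Z = φ Z

/-- `Q` is quasi-closed. -/
def QuasiClosed (φ : Set α → Set α) (Q : Set α) : Prop :=
  ∀ X ⊆ Q, φ X ⊂ φ Q → φ X ⊆ Q

/-- `P` is pseudo-closed: non-closed and inclusion-minimal among the quasi-closed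
sets spanning `φ P`. -/
def PseudoClosed (φ : Set α → Set α) (P : Set α) : Prop :=
  ¬ IsClosedSet φ P ∧ QuasiClosed φ P ∧
    ∀ Q : Set α, QuasiClosed φ Q → φ Q = φ P → Q ⊆ P → Q = P

/-- `C` is an essential closed set. -/
def Essential (φ : Set α → Set α) (C : Set α) : Prop :=
  IsClosedSet φ C ∧ ∃ P : Set α, PseudoClosed φ P ∧ φ P = C

/-- The canonical (Duquenne–Guigues) base. -/
def DGBase (φ : Set α → Set α) : Set (Set α × Set α) :=
  {p | ∃ P : Set α, PseudoClosed φ P ∧ p = (P, φ P \ P)}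

/-- `C'` is a predecessor (lower cover) of `C` in the closure lattice. -/
def Predecessor (φ : Set α → Set α) (C' C : Set α) : Prop :=
  IsClosedSet φ C' ∧ IsClosedSet φ C ∧ C' ⊂ C ∧
    ∀ C'' : Set α, IsClosedSet φ C'' → C' ⊂ C'' → C'' ⊆ C → C'' = C

/-- The closure lattice is join-semidistributive. -/
def JoinSemidistrib (φ : Set α → Set α) : Prop :=
  ∀ C1 C2 C3 : Set α, IsClosedSet φ C1 → IsClosedSet φ C2 → IsClosedSet φ C3 →
    φ (C1 ∪ C2) = φ (C1 ∪ C3) → φ (C1 ∪ C2) = φ (C1 ∪ C2 ∩ C3)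

/-- The closure lattice is meet-semidistributive. -/
def MeetSemidistrib (φ : Set α → Set α) : Prop :=
  ∀ C1 C2 C3 : Set α, IsClosedSet φ C1 → IsClosedSet φ C2 → IsClosedSet φ C3 →
    C1 ∩ C2 = C1 ∩ C3 → C1 ∩ C2 = C1 ∩ φ (C2 ∪ C3)

/-- The closure lattice is semidistributive. -/
def Semidistrib (φ : Set α → Set α) : Prop :=
  JoinSemidistrib φ ∧ MeetSemidistrib φ

/-- The closure lattice is modular: `a ≤ b → (b ∧ c) ∨ a = b ∧ (c ∨ a)`. -/
def ModularLattice (φ : Set α → Set α) : Prop :=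
  ∀ A B C : Set α, IsClosedSet φ A → IsClosedSet φ B → IsClosedSet φ C →
    A ⊆ B → φ (B ∩ C ∪ A) = B ∩ φ (C ∪ A)

/-- The closure lattice is atomistic (in a standard space). -/
def Atomistic (φ : Set α → Set α) : Prop :=
  ∀ x : α, φ {x} = ({x} : Set α)

/-- The closure lattice is upper-semimodular. -/
def UpperSemimodular (φ : Set α → Set α) : Prop :=
  ∀ C1 C2 : Set α, IsClosedSet φ C1 → IsClosedSet φ C2 →
    Predecessor φ (C1 ∩ C2) C1 → Predecessor φ C2 (φ (C1 ∪ C2))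

/-- The closure lattice is geometric: atomistic and upper-semimodular. -/
def Geometric (φ : Set α → Set α) : Prop :=
  Atomistic φ ∧ UpperSemimodular φ

/-- `x` is prime in the lattice `(↓C, ⊆)` of closed subsets of `C`. -/
def PrimeIn (φ : Set α → Set α) (C : Set α) (x : α) : Prop :=
  ∀ C1 C2 : Set α, IsClosedSet φ C1 → IsClosedSet φ C2 → C1 ⊆ C → C2 ⊆ C →
    φ {x} ⊆ φ (C1 ∪ C2) → φ {x} ⊆ C1 ∨ φ {x} ⊆ C2

/-- `x ∈ C` is almost prime in `(↓C, ⊆)`. -/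
def AlmostPrimeIn (φ : Set α → Set α) (C : Set α) (x : α) : Prop :=
  x ∈ C ∧ ¬ PrimeIn φ C x ∧
    ∀ C' : Set α, Predecessor φ C' C → x ∈ C' → PrimeIn φ C' x

/-- `A` is a `φ^b`-minimal spanning set of the closed set `C`. -/
def BMinSpanning (φ : Set α → Set α) (C A : Set α) : Prop :=
  φ A = C ∧ ∀ B : Set α, binPart φ B ⊂ binPart φ A → φ B ≠ C

/-- `C` is join-irreducible: nonempty and whenever it is a join of two closed sets
it equals one of them. -/
def JoinIrred (φ : Set α → Set α) (C : Set α) : Prop :=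
  IsClosedSet φ C ∧ C ≠ ∅ ∧
    ∀ C1 C2 : Set α, IsClosedSet φ C1 → IsClosedSet φ C2 →
      C = φ (C1 ∪ C2) → C = C1 ∨ C = C2

/-- `C` is join-irreducible: nonempty with a unique predecessor. -/
def JoinIrredUP (φ : Set α → Set α) (C : Set α) : Prop :=
  IsClosedSet φ C ∧ C ≠ ∅ ∧ ∃! C' : Set α, Predecessor φ C' C

/-- The set `C_*`: the intersection of all predecessors of `C`. It is `univ` when
`C` has no predecessor. -/
def predMeet (φ : Set α → Set α) (C : Set α) : Set α :=
  ⋂₀ {D : Set α | Predecessor φ D C}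

/-- The points `x` of `C` such that `C' \ C_* = {x}` for some predecessor `C'` of `C`; in the
modular case these are the points that the E-base adjoins to a quasi-closed set spanning `C`. -/
def isolatedPoints (φ : Set α → Set α) (C : Set α) : Set α :=
  {x : α | x ∈ C ∧ ∃ C' : Set α, Predecessor φ C' C ∧ C' \ predMeet φ C = {x}}

variable {φ : Set α → Set α} {A B C D E G H K P Q T X Y : Set α} {p q x y : α}

namespace IsClosureOp

theorem subset_closure (hφ : IsClosureOp φ) : X ⊆ φ X :=
  hφ.1 X

theorem mono (hφ : IsClosureOp φ) (hXY : X ⊆ Y) : φ X ⊆ φ Y :=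
  hφ.2.2 X Y hXY

theorem isClosedSet_closure (hφ : IsClosureOp φ) : IsClosedSet φ (φ X) :=
  hφ.2.1 X

theorem closure_min (hφ : IsClosureOp φ) (hXD : X ⊆ D) (hD : IsClosedSet φ D) : φ X ⊆ D :=
  (hφ.mono hXD).trans hD.subset

theorem mem_closure_singleton (hφ : IsClosureOp φ) : x ∈ φ {x} :=
  hφ.subset_closure (mem_singleton x)

theorem closure_singleton_subset (hφ : IsClosureOp φ) (hD : IsClosedSet φ D) (hx : x ∈ D) :
    φ {x} ⊆ D :=
  hφ.closure_min (singleton_subset_iff.2 hx) hD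

theorem mem_closure_insert (hφ : IsClosureOp φ) : x ∈ φ (insert x X) :=
  hφ.subset_closure (mem_insert x X)

theorem subset_closure_insert (hφ : IsClosureOp φ) : X ⊆ φ (insert x X) :=
  (subset_insert x X).trans hφ.subset_closure

theorem closure_insert_subset (hφ : IsClosureOp φ) (hD : IsClosedSet φ D) (hx : x ∈ D)
    (hX : X ⊆ D) : φ (insert x X) ⊆ D :=
  hφ.closure_min (insert_subset hx hX) hD

theorem subset_binPart (hφ : IsClosureOp φ) : X ⊆ binPart φ X :=
  fun _ hx => mem_biUnion hx hφ.mem_closure_singleton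

theorem isClosedSet_sInter (hφ : IsClosureOp φ) {S : Set (Set α)}
    (hS : ∀ D ∈ S, IsClosedSet φ D) : IsClosedSet φ (⋂₀ S) :=
  (subset_sInter fun D hD => hφ.closure_min (sInter_subset_of_mem hD) (hS D hD)).antisymm
    hφ.subset_closure

theorem isClosedSet_inter (hφ : IsClosureOp φ) (hD : IsClosedSet φ D) (hE : IsClosedSet φ E) :
    IsClosedSet φ (D ∩ E) :=
  (subset_inter (hφ.closure_min inter_subset_left hD)
    (hφ.closure_min inter_subset_right hE)).antisymm hφ.subset_closure

theorem isClosedSet_predMeet (hφ : IsClosureOp φ) : IsClosedSet φ (predMeet φ C) :=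
  hφ.isClosedSet_sInter fun _ hD => hD.1

end IsClosureOp

namespace IsStandard

theorem isClosedSet_empty (hφ : IsClosureOp φ) (hstd : IsStandard φ) : IsClosedSet φ ∅ :=
  Subset.antisymm
    (fun z hz => (hφ.closure_min (empty_subset _) (hstd z) hz).2 rfl)
    hφ.subset_closure

theorem joinIrredUP_closure_singleton (hφ : IsClosureOp φ) (hstd : IsStandard φ) (q : α) :
    JoinIrredUP φ (φ {q}) := by
  have hq : q ∈ φ {q} := hφ.mem_closure_singleton
  have le_diff : ∀ D, IsClosedSet φ D → D ⊂ φ {q} → D ⊆ φ {q} \ {q} := fun D hD hDq =>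
    subset_sdiff_singleton hDq.subset fun hqD => hDq.not_subset (hφ.closure_singleton_subset hD hqD)
  have hlt : φ {q} \ {q} ⊂ φ {q} := sdiff_singleton_ssubset.2 hq
  refine ⟨hφ.isClosedSet_closure, nonempty_of_mem hq |>.ne_empty, φ {q} \ {q},
    ⟨hstd q, hφ.isClosedSet_closure, hlt, fun E hE hlt' hle => ?_⟩, fun D hD => ?_⟩
  · by_contra hne
    exact hlt'.not_subset (le_diff E hE (hle.ssubset_of_ne hne))
  · by_contra hne
    exact hlt.ne (hD.2.2.2 _ (hstd q) ((le_diff D hD.1 hD.2.2.1).ssubset_of_ne hne) hlt.subset)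

theorem exists_mem_diff_closure_singleton_diff_subset (hφ : IsClosureOp φ) (hstd : IsStandard φ)
    (hfin : P.Finite) (hP : binPart φ P ⊆ P) (hPX : ¬ P ⊆ X) :
    ∃ q ∈ P \ X, φ {q} \ {q} ⊆ X := by
  obtain ⟨q, hq⟩ := (hfin.sdiff (t := X)).exists_minimalFor (fun q => φ {q}) _
    (sdiff_nonempty.2 hPX)
  refine ⟨q, hq.prop, fun z hz => by_contra fun hzX => ?_⟩
  have hzq : φ {z} ⊆ φ {q} \ {q} := hφ.closure_singleton_subset (hstd q) hz
  have hzP : z ∈ P := hP (mem_biUnion hq.prop.1 hz.1)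
  have hqz : φ {q} ⊆ φ {z} := hq.le_of_le ⟨hzP, hzX⟩ (hzq.trans sdiff_subset)
  exact (hzq (hqz hφ.mem_closure_singleton)).2 rfl

end IsStandard

namespace Predecessor

theorem subset (hH : Predecessor φ H C) : H ⊆ C :=
  hH.2.2.1.subset

theorem predMeet_subset (hH : Predecessor φ H C) : predMeet φ C ⊆ H :=
  sInter_subset_of_mem hH

theorem eq_of_subset (hH : Predecessor φ H C) (hK : Predecessor φ K C) (hHK : H ⊆ K) : H = K := by
  by_contra hne
  exact hK.2.2.1.ne (hH.2.2.2 K hK.1 (hHK.ssubset_of_ne hne) hK.subset)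

theorem closure_union_eq (hφ : IsClosureOp φ) (hH : Predecessor φ H C) (hX : X ⊆ C)
    (hXH : ¬ X ⊆ H) : φ (H ∪ X) = C :=
  hH.2.2.2 _ hφ.isClosedSet_closure
    ⟨subset_union_left.trans hφ.subset_closure,
      fun h => hXH ((subset_union_right.trans hφ.subset_closure).trans h)⟩
    (hφ.closure_min (union_subset hH.subset hX) hH.2.1)

theorem closure_insert_eq (hφ : IsClosureOp φ) (hH : Predecessor φ H C) (hx : x ∈ C)
    (hxH : x ∉ H) : φ (insert x H) = C := by
  rw [← union_singleton]
  exact hH.closure_union_eq hφ (singleton_subset_iff.2 hx) (mt singleton_subset_iff.1 hxH)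

end Predecessor

theorem exists_predecessor_superset (hfin : C.Finite) (hC : IsClosedSet φ C)
    (hD : IsClosedSet φ D) (hDC : D ⊂ C) : ∃ H, Predecessor φ H C ∧ D ⊆ H := by
  have hproper : {E | IsClosedSet φ E ∧ E ⊂ C}.Finite :=
    hfin.finite_subsets.subset fun E hE => hE.2.subset
  obtain ⟨H, hDH, hH⟩ := hproper.exists_le_maximal (a := D) ⟨hD, hDC⟩
  refine ⟨H, ⟨hH.prop.1, hC, hH.prop.2, fun E hE hHE hEC => ?_⟩, hDH⟩
  by_contra hne
  exact hH.not_prop_of_ssuperset hHE ⟨hE, hEC.ssubset_of_ne hne⟩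

namespace ModularLattice

theorem predecessor_closure_insert (hφ : IsClosureOp φ) (hmod : ModularLattice φ)
    (hG : IsClosedSet φ G) (hp : φ {p} \ {p} ⊆ G) (hpG : p ∉ G) :
    Predecessor φ G (φ (insert p G)) := by
  refine ⟨hG, hφ.isClosedSet_closure,
    ⟨hφ.subset_closure_insert, fun h => hpG (h hφ.mem_closure_insert)⟩, fun D hD hGD hDp => ?_⟩
  by_cases hpD : p ∈ D
  · exact hDp.antisymm (hφ.closure_insert_subset hD hpD hGD.subset)
  have hmeet : D ∩ φ {p} ⊆ G := fun z hz => hp ⟨hz.2, fun hzp => hpD (hzp ▸ hz.1)⟩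
  have hjoin : D ⊆ φ (φ {p} ∪ G) :=
    hDp.trans (hφ.mono (insert_subset (Or.inl hφ.mem_closure_singleton) subset_union_right))
  refine absurd ?_ hGD.not_subset
  calc
    D ⊆ D ∩ φ (φ {p} ∪ G) := subset_inter Subset.rfl hjoin
    _ = φ (D ∩ φ {p} ∪ G) := (hmod G D (φ {p}) hG hD hφ.isClosedSet_closure hGD.subset).symm
    _ ⊆ G := hφ.closure_min (union_subset hmeet Subset.rfl) hG

theorem closure_insert_eq_closure_insert (hφ : IsClosureOp φ) (hmod : ModularLattice φ)
    (hG : IsClosedSet φ G) (hx : φ {x} \ {x} ⊆ G) (hy : y ∈ φ (insert x G)) (hyG : y ∉ G) :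
    φ (insert y G) = φ (insert x G) := by
  have hxG : x ∉ G := fun hxG => hyG (hφ.closure_insert_subset hG hxG Subset.rfl hy)
  exact (hmod.predecessor_closure_insert hφ hG hx hxG).closure_insert_eq hφ hy hyG

theorem closure_singleton_diff_subset_predecessor (hφ : IsClosureOp φ) (hstd : IsStandard φ)
    (hmod : ModularLattice φ) (hH : Predecessor φ H C) (hp : p ∈ C) : φ {p} \ {p} ⊆ H := by
  have hpC : φ {p} ⊆ C := hφ.closure_singleton_subset hH.2.1 hp
  by_cases hpH : p ∈ H
  · exact sdiff_subset.trans (hφ.closure_singleton_subset hH.1 hpH)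
  by_contra hnot
  have hmeet : φ {p} ∩ H ⊆ φ {p} \ {p} := fun z hz => ⟨hz.1, fun hzp => hpH (hzp ▸ hz.2)⟩
  have hjoin : φ (φ {p} ∩ H ∪ φ {p} \ {p}) = φ {p} := by
    rw [hmod _ _ H (hstd p) hφ.isClosedSet_closure hH.1 sdiff_subset,
      hH.closure_union_eq hφ (sdiff_subset.trans hpC) hnot, inter_eq_left.2 hpC]
  have hpp : φ {p} ⊆ φ {p} \ {p} :=
    hjoin.symm.trans_subset (hφ.closure_min (union_subset hmeet Subset.rfl) (hstd p))
  exact (hpp hφ.mem_closure_singleton).2 rfl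

theorem closure_singleton_diff_subset_predMeet (hφ : IsClosureOp φ) (hstd : IsStandard φ)
    (hmod : ModularLattice φ) (hp : p ∈ C) : φ {p} \ {p} ⊆ predMeet φ C :=
  subset_sInter fun _ hH => hmod.closure_singleton_diff_subset_predecessor hφ hstd hH hp

end ModularLattice

namespace QuasiClosed

theorem binPart_subset (hφ : IsClosureOp φ) (hstd : IsStandard φ) (hQ : QuasiClosed φ Q)
    (hnji : ¬ JoinIrredUP φ (φ Q)) : binPart φ Q ⊆ Q := by
  refine iUnion₂_subset fun q hq => ?_
  have hqQ : {q} ⊆ Q := singleton_subset_iff.2 hq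
  refine hQ _ hqQ ((hφ.mono hqQ).ssubset_of_ne fun heq => hnji ?_)
  exact heq ▸ hstd.joinIrredUP_closure_singleton hφ q

theorem exists_predecessor_subset (hφ : IsClosureOp φ) (hstd : IsStandard φ)
    (hmod : ModularLattice φ) (hQ : QuasiClosed φ Q) (hfin : Q.Finite) (hbin : binPart φ Q ⊆ Q)
    (hne : ¬ φ Q ⊆ Q) (hD : IsClosedSet φ D) (hDQ : D ⊆ Q) :
    ∃ H, Predecessor φ H (φ Q) ∧ D ⊆ H ∧ H ⊆ Q := by
  have hinner : {E | IsClosedSet φ E ∧ E ⊆ Q}.Finite :=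
    hfin.finite_subsets.subset fun E hE => hE.2
  obtain ⟨H, hDH, hH⟩ := hinner.exists_le_maximal (a := D) ⟨hD, hDQ⟩
  have hQH : ¬ Q ⊆ H := fun h => hne ((hφ.closure_min h hH.prop.1).trans hH.prop.2)
  obtain ⟨q, ⟨hqQ, hqH⟩, hqlow⟩ :=
    hstd.exists_mem_diff_closure_singleton_diff_subset hφ hfin hbin hQH
  have hsub : insert q H ⊆ Q := insert_subset hqQ hH.prop.2
  have hspan : φ (insert q H) = φ Q := by
    by_contra hspan
    have hle : φ (insert q H) ⊆ Q := hQ _ hsub ((hφ.mono hsub).ssubset_of_ne hspan)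
    exact hqH (hH.le_of_ge ⟨hφ.isClosedSet_closure, hle⟩ hφ.subset_closure_insert
      hφ.mem_closure_insert)
  exact ⟨H, hspan ▸ hmod.predecessor_closure_insert hφ hH.prop.1 hqlow hqH, hDH, hH.prop.2⟩

theorem exists_predecessor_subset_mem (hφ : IsClosureOp φ) (hstd : IsStandard φ)
    (hmod : ModularLattice φ) (hQ : QuasiClosed φ Q) (hfin : Q.Finite) (hbin : binPart φ Q ⊆ Q)
    (hne : ¬ φ Q ⊆ Q) (hq : q ∈ Q) : ∃ H, Predecessor φ H (φ Q) ∧ q ∈ H ∧ H ⊆ Q := by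
  obtain ⟨H, hH, hqH, hHQ⟩ := hQ.exists_predecessor_subset hφ hstd hmod hfin hbin hne
    hφ.isClosedSet_closure ((subset_biUnion_of_mem (u := fun q => φ {q}) hq).trans hbin)
  exact ⟨H, hH, hqH hφ.mem_closure_singleton, hHQ⟩

theorem predMeet_subset (hφ : IsClosureOp φ) (hstd : IsStandard φ) (hmod : ModularLattice φ)
    (hQ : QuasiClosed φ Q) (hfin : Q.Finite) (hbin : binPart φ Q ⊆ Q) (hne : ¬ φ Q ⊆ Q) :
    predMeet φ (φ Q) ⊆ Q := by
  obtain ⟨H, hH, -, hHQ⟩ := hQ.exists_predecessor_subset hφ hstd hmod hfin hbin hne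
    (hstd.isClosedSet_empty hφ) (empty_subset Q)
  exact hH.predMeet_subset.trans hHQ

theorem exists_predecessors_not_subset (hφ : IsClosureOp φ) (hstd : IsStandard φ)
    (hmod : ModularLattice φ) (hQ : QuasiClosed φ Q) (hfin : Q.Finite) (hbin : binPart φ Q ⊆ Q)
    (hne : ¬ φ Q ⊆ Q) :
    ∃ H K, Predecessor φ H (φ Q) ∧ Predecessor φ K (φ Q) ∧ H ⊆ Q ∧ K ⊆ Q ∧ ¬ H ⊆ K := by
  obtain ⟨K, hK, -, hKQ⟩ := hQ.exists_predecessor_subset hφ hstd hmod hfin hbin hne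
    (hstd.isClosedSet_empty hφ) (empty_subset Q)
  obtain ⟨r, hrQ, hrK⟩ : ∃ r ∈ Q, r ∉ K :=
    not_subset.1 fun h => hK.2.2.1.not_subset (hφ.closure_min h hK.1)
  obtain ⟨H, hH, hrH, hHQ⟩ := hQ.exists_predecessor_subset_mem hφ hstd hmod hfin hbin hne hrQ
  exact ⟨H, K, hH, hK, hHQ, hKQ, fun h => hrK (h hrH)⟩

theorem subset_of_inter_not_subset (hφ : IsClosureOp φ) (hmod : ModularLattice φ)
    (hQ : QuasiClosed φ Q) (hH : IsClosedSet φ H) (hHQ : H ⊆ Q) (hK : Predecessor φ K (φ Q))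
    (hKQ : K ⊆ Q) (hE : IsClosedSet φ E) (hEQ : E ⊂ φ Q) (hEHK : ¬ E ∩ H ⊆ K) : E ⊆ Q := by
  have hjoin : φ (E ∩ K ∪ E ∩ H) = E := by
    rw [hmod _ _ K (hφ.isClosedSet_inter hE hH) hE hK.1 inter_subset_left,
      hK.closure_union_eq hφ (inter_subset_left.trans hEQ.subset) hEHK,
      inter_eq_left.2 hEQ.subset]
  have hsub : E ∩ K ∪ E ∩ H ⊆ Q :=
    union_subset (inter_subset_right.trans hKQ) (inter_subset_right.trans hHQ)
  exact hjoin.symm.trans_subset (hQ _ hsub (hjoin.symm ▸ hEQ))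

theorem predecessor_closure_insert_predMeet (hφ : IsClosureOp φ) (hstd : IsStandard φ)
    (hmod : ModularLattice φ) (hQ : QuasiClosed φ Q) (hfin : Q.Finite) (hbin : binPart φ Q ⊆ Q)
    (hx : x ∈ φ Q) (hxQ : x ∉ Q) : Predecessor φ (φ (insert x (predMeet φ (φ Q)))) (φ Q) := by
  have hne : ¬ φ Q ⊆ Q := fun h => hxQ (h hx)
  obtain ⟨H, K, hH, hK, hHQ, hKQ, hHK⟩ :=
    hQ.exists_predecessors_not_subset hφ hstd hmod hfin hbin hne
  obtain ⟨r, hrH, hrK⟩ := not_subset.1 hHK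
  have hr : r ∈ φ Q := hH.subset hrH
  set G := predMeet φ (φ Q)
  have hGlow : ∀ p ∈ φ Q, φ {p} \ {p} ⊆ G := fun p hp =>
    hmod.closure_singleton_diff_subset_predMeet hφ hstd hp
  have hxG : x ∉ G := fun h => hxQ (hQ.predMeet_subset hφ hstd hmod hfin hbin hne h)
  have hspan : φ (insert r (φ (insert x G))) = φ Q := by
    have hle : φ (insert r (φ (insert x G))) ⊆ φ Q :=
      hφ.closure_insert_subset hφ.isClosedSet_closure hr (hφ.closure_insert_subset
        hφ.isClosedSet_closure hx (hH.predMeet_subset.trans hH.subset))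
    by_contra hspan
    exact hxQ (hQ.subset_of_inter_not_subset hφ hmod hH.1 hHQ hK hKQ hφ.isClosedSet_closure
      (hle.ssubset_of_ne hspan) (fun h => hrK (h ⟨hφ.mem_closure_insert, hrH⟩))
      (hφ.subset_closure_insert hφ.mem_closure_insert))
  have hrG : r ∉ φ (insert x G) := by
    intro hrG
    have htop : φ (insert x G) = φ Q := by
      rw [← hspan, insert_eq_of_mem hrG, hφ.isClosedSet_closure]
    have hGC : Predecessor φ G (φ Q) :=
      htop ▸ hmod.predecessor_closure_insert hφ hφ.isClosedSet_predMeet (hGlow x hx) hxG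
    have hHG : H ⊆ G := (hGC.eq_of_subset hH hH.predMeet_subset).symm.subset
    exact hrK (hK.predMeet_subset (hHG hrH))
  have hcover := hmod.predecessor_closure_insert hφ hφ.isClosedSet_closure
    ((hGlow r hr).trans hφ.subset_closure_insert) hrG
  rwa [hspan] at hcover

theorem notMem_of_mem_closure_insert_predMeet (hφ : IsClosureOp φ) (hstd : IsStandard φ)
    (hmod : ModularLattice φ) (hQ : QuasiClosed φ Q) (hfin : Q.Finite) (hbin : binPart φ Q ⊆ Q)
    (hx : x ∈ φ Q) (hxQ : x ∉ Q) (hy : y ∈ φ (insert x (predMeet φ (φ Q))))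
    (hyG : y ∉ predMeet φ (φ Q)) : y ∉ Q := by
  intro hyQ
  obtain ⟨H, hH, hyH, hHQ⟩ :=
    hQ.exists_predecessor_subset_mem hφ hstd hmod hfin hbin (fun h => hxQ (h hx)) hyQ
  have hKH : φ (insert x (predMeet φ (φ Q))) ⊆ H := by
    rw [← hmod.closure_insert_eq_closure_insert hφ hφ.isClosedSet_predMeet
      (hmod.closure_singleton_diff_subset_predMeet hφ hstd hx) hy hyG]
    exact hφ.closure_insert_subset hH.1 hyH hH.predMeet_subset
  exact hxQ (hHQ (hKH hφ.mem_closure_insert))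

end QuasiClosed

theorem eq_of_mem_isolatedPoints (hφ : IsClosureOp φ) (hx : x ∈ isolatedPoints φ C)
    (hy : y ∈ φ (insert x (predMeet φ C))) (hyG : y ∉ predMeet φ C) : y = x := by
  obtain ⟨-, K, hK, hKx⟩ := hx
  have hxK : x ∈ K := (hKx.symm.subset rfl).1
  exact hKx.subset ⟨hφ.closure_insert_subset hK.1 hxK hK.predMeet_subset hy, hyG⟩

theorem exists_ne_of_notMem_isolatedPoints (hφ : IsClosureOp φ)
    (hK : Predecessor φ (φ (insert x (predMeet φ C))) C) (hxG : x ∉ predMeet φ C)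
    (hx : x ∉ isolatedPoints φ C) :
    ∃ y ∈ φ (insert x (predMeet φ C)), y ∉ predMeet φ C ∧ y ≠ x := by
  by_contra! hall
  exact hx ⟨hK.subset hφ.mem_closure_insert, _, hK, Subset.antisymm (fun z hz => hall z hz.1 hz.2)
    (singleton_subset_iff.2 ⟨hφ.mem_closure_insert, hxG⟩)⟩

theorem exists_isDGen_subset (hφ : IsClosureOp φ) (hfin : T.Finite) (hT : binPart φ T ⊆ T)
    (hx : x ∉ T) (hxT : x ∈ φ T) : ∃ B ⊆ T, IsDGen φ x B := by
  have hgen : {B | B ⊆ T ∧ x ∈ φ B}.Finite := hfin.finite_subsets.subset fun B hB => hB.1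
  obtain ⟨B, hB⟩ := hgen.exists_minimalFor (binPart φ) _ ⟨T, Subset.rfl, hxT⟩
  have hBT : binPart φ B ⊆ T := (biUnion_subset_biUnion_left hB.prop.1).trans hT
  refine ⟨B, hB.prop.1, hB.prop.2, fun hxB => hx (hBT hxB), fun B' hB' hxB' => ?_⟩
  have hB'T : B' ⊆ T := (hφ.subset_binPart.trans hB'.subset).trans hBT
  exact hB'.not_subset (hB.le_of_le ⟨hB'T, hxB'⟩ hB'.subset)

theorem exists_isDGen_closure_subset (hφ : IsClosureOp φ) (hmod : ModularLattice φ)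
    (hfin : G.Finite) (hG : IsClosedSet φ G) (hxlow : φ {x} \ {x} ⊆ G) (hylow : φ {y} \ {y} ⊆ G)
    (hxG : x ∉ G) (hy : y ∈ φ (insert x G)) (hyG : y ∉ G) (hyx : y ≠ x) :
    ∃ B, IsDGen φ x B ∧ φ B ⊆ φ (insert x G) := by
  have heq := hmod.closure_insert_eq_closure_insert hφ hG hxlow hy hyG
  have hbin : binPart φ (insert y G) ⊆ insert y G := by
    refine iUnion₂_subset (forall_mem_insert.2 ⟨sdiff_singleton_subset_iff.1 hylow, fun t ht => ?_⟩)
    exact (hφ.closure_singleton_subset hG ht).trans (subset_insert y G)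
  obtain ⟨B, hBT, hB⟩ := exists_isDGen_subset hφ (hfin.insert y) hbin
    (fun hx => hx.elim hyx.symm hxG) (heq ▸ hφ.mem_closure_insert)
  exact ⟨B, hB, heq ▸ hφ.mono hBT⟩

theorem IsDGen.exists_mem_ne_of_closure_ssubset (hφ : IsClosureOp φ) (hfin : C.Finite)
    (hB : IsDGen φ x B) (hBC : φ B ⊂ C) (hK : Predecessor φ (φ (insert x (predMeet φ C))) C)
    (hxG : x ∉ predMeet φ C) :
    ∃ b ∈ B, b ∈ φ (insert x (predMeet φ C)) ∧ b ∉ predMeet φ C ∧ b ≠ x := by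
  obtain ⟨H, hH, hBH⟩ := exists_predecessor_superset hfin hK.2.1 hφ.isClosedSet_closure hBC
  have hKH : φ (insert x (predMeet φ C)) = H := hK.eq_of_subset hH
    (hφ.closure_insert_subset hH.1 (hBH hB.1) hH.predMeet_subset)
  obtain ⟨b, hb, hbG⟩ : ∃ b ∈ B, b ∉ predMeet φ C :=
    not_subset.1 fun h => hxG (hφ.closure_min h hφ.isClosedSet_predMeet hB.1)
  exact ⟨b, hb, hKH ▸ hBH (hφ.subset_closure hb), hbG,
    fun hbx => hB.2.1 (hφ.subset_binPart (hbx ▸ hb))⟩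

theorem impClosedSet_eBase_iff : ImpClosedSet (EBase φ) Y ↔
    binPart φ Y ⊆ Y ∧ ∀ x A, IsEGen φ x A → A ⊆ Y → x ∈ Y := by
  refine ⟨fun hY => ⟨iUnion₂_subset fun a ha x hx => ?_, fun x A hA hAY => ?_⟩, ?_⟩
  · by_cases hxa : x = a
    · exact hxa ▸ ha
    · exact hY _ (Or.inl ⟨a, x, rfl, hx, hxa⟩) (singleton_subset_iff.2 ha) rfl
  · exact hY _ (Or.inr ⟨x, A, rfl, hA⟩) hAY rfl
  · rintro ⟨hbin, hgen⟩ _ (⟨a, x, rfl, hx, -⟩ | ⟨x, A, rfl, hA⟩) hY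
    · exact singleton_subset_iff.2 (hbin (mem_biUnion (singleton_subset_iff.1 hY) hx))
    · exact singleton_subset_iff.2 (hgen x A hA hY)

namespace QuasiClosed

theorem binPart_union_isolatedPoints_subset (hφ : IsClosureOp φ) (hstd : IsStandard φ)
    (hmod : ModularLattice φ) (hQ : QuasiClosed φ Q) (hfin : Q.Finite)
    (hbin : binPart φ Q ⊆ Q) :
    binPart φ (Q ∪ isolatedPoints φ (φ Q)) ⊆ Q ∪ isolatedPoints φ (φ Q) := by
  refine iUnion₂_subset fun a ha => ?_
  by_cases haQ : a ∈ Q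
  · exact (subset_biUnion_of_mem (u := fun a => φ {a}) haQ).trans
      (hbin.trans subset_union_left)
  have haS : a ∈ isolatedPoints φ (φ Q) := ha.resolve_left haQ
  have hlow : φ {a} \ {a} ⊆ Q :=
    (hmod.closure_singleton_diff_subset_predMeet hφ hstd haS.1).trans
      (hQ.predMeet_subset hφ hstd hmod hfin hbin fun h => haQ (h haS.1))
  exact (sdiff_singleton_subset_iff.1 hlow).trans
    (insert_subset (Or.inr haS) subset_union_left)

theorem closure_eq_of_isDGen_of_mem_isolatedPoints (hφ : IsClosureOp φ) (hstd : IsStandard φ)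
    (hmod : ModularLattice φ) (hQ : QuasiClosed φ Q) (hfin : (φ Q).Finite)
    (hbin : binPart φ Q ⊆ Q) (hx : x ∈ isolatedPoints φ (φ Q)) (hxQ : x ∉ Q)
    (hB : IsDGen φ x B) (hBQ : φ B ⊆ φ Q) : φ B = φ Q := by
  have hfinQ := hfin.subset hφ.subset_closure
  have hK := hQ.predecessor_closure_insert_predMeet hφ hstd hmod hfinQ hbin hx.1 hxQ
  have hxG : x ∉ predMeet φ (φ Q) := fun h =>
    hxQ (hQ.predMeet_subset hφ hstd hmod hfinQ hbin (fun h => hxQ (h hx.1)) h)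
  by_contra hne
  obtain ⟨b, -, hbK, hbG, hbx⟩ :=
    hB.exists_mem_ne_of_closure_ssubset hφ hfin (hBQ.ssubset_of_ne hne) hK hxG
  exact hbx (eq_of_mem_isolatedPoints hφ hx hbK hbG)

theorem exists_isEGen_of_mem_isolatedPoints (hφ : IsClosureOp φ) (hstd : IsStandard φ)
    (hmod : ModularLattice φ) (hQ : QuasiClosed φ Q) (hfin : (φ Q).Finite)
    (hbin : binPart φ Q ⊆ Q) (hx : x ∈ isolatedPoints φ (φ Q)) (hxQ : x ∉ Q) :
    ∃ B ⊆ Q, IsEGen φ x B := by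
  have hspan : ∀ B, IsDGen φ x B → φ B ⊆ φ Q → φ B = φ Q := fun B =>
    hQ.closure_eq_of_isDGen_of_mem_isolatedPoints hφ hstd hmod hfin hbin hx hxQ
  obtain ⟨B, hBQ, hB⟩ :=
    exists_isDGen_subset hφ (hfin.subset hφ.subset_closure) hbin hxQ hx.1
  have hBC : φ B = φ Q := hspan B hB (hφ.mono hBQ)
  exact ⟨B, hBQ, hB, fun B' hB' hle => (hspan B' hB' (hle.trans hBC.subset)).trans hBC.symm⟩

theorem mem_union_isolatedPoints_of_isEGen (hφ : IsClosureOp φ) (hstd : IsStandard φ)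
    (hmod : ModularLattice φ) (hQ : QuasiClosed φ Q) (hfin : (φ Q).Finite)
    (hbin : binPart φ Q ⊆ Q) (hA : IsEGen φ x A) (hAQ : A ⊆ Q ∪ isolatedPoints φ (φ Q)) :
    x ∈ Q ∪ isolatedPoints φ (φ Q) := by
  by_contra hxY
  obtain ⟨hxQ, hxS⟩ : x ∉ Q ∧ x ∉ isolatedPoints φ (φ Q) := not_or.1 hxY
  have hAC : φ A ⊆ φ Q := hφ.closure_min
    (hAQ.trans (union_subset hφ.subset_closure fun z hz => hz.1)) hφ.isClosedSet_closure
  have hxC : x ∈ φ Q := hAC hA.1.1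
  have hfinQ := hfin.subset hφ.subset_closure
  have hK := hQ.predecessor_closure_insert_predMeet hφ hstd hmod hfinQ hbin hxC hxQ
  have hGQ := hQ.predMeet_subset hφ hstd hmod hfinQ hbin fun h => hxQ (h hxC)
  have hxG : x ∉ predMeet φ (φ Q) := fun h => hxQ (hGQ h)
  have hlow : ∀ p ∈ φ Q, φ {p} \ {p} ⊆ predMeet φ (φ Q) := fun p hp =>
    hmod.closure_singleton_diff_subset_predMeet hφ hstd hp
  have hAne : φ A ≠ φ Q := by
    intro hAeq
    obtain ⟨y, hyK, hyG, hyx⟩ := exists_ne_of_notMem_isolatedPoints hφ hK hxG hxS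
    obtain ⟨B, hB, hBK⟩ := exists_isDGen_closure_subset hφ hmod (hfinQ.subset hGQ)
      hφ.isClosedSet_predMeet (hlow x hxC) (hlow y (hK.subset hyK)) hxG hyK hyG hyx
    have hBA : φ B = φ A := hA.2 B hB ((hBK.trans hK.subset).trans hAeq.symm.subset)
    exact hK.2.2.1.not_subset ((hAeq.symm.trans hBA.symm).trans_subset hBK)
  obtain ⟨b, hbA, hbK, hbG, hbx⟩ :=
    hA.1.exists_mem_ne_of_closure_ssubset hφ hfin (hAC.ssubset_of_ne hAne) hK hxG
  have hbQ : b ∉ Q :=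
    hQ.notMem_of_mem_closure_insert_predMeet hφ hstd hmod hfinQ hbin hxC hxQ hbK hbG
  have hbS : b ∈ isolatedPoints φ (φ Q) := (hAQ hbA).resolve_left hbQ
  have hxb : x ∈ φ (insert b (predMeet φ (φ Q))) := by
    rw [hmod.closure_insert_eq_closure_insert hφ hφ.isClosedSet_predMeet (hlow x hxC) hbK hbG]
    exact hφ.mem_closure_insert
  exact hbx (eq_of_mem_isolatedPoints hφ hbS hxb hxG).symm

end QuasiClosed

theorem statement15_general (hφ : IsClosureOp φ) (hstd : IsStandard φ) (hmod : ModularLattice φ)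
    (hfin : C.Finite) (hnji : ¬ JoinIrredUP φ C) (hQ : QuasiClosed φ Q) (hQC : φ Q = C) :
    ImpClosure (EBase φ) Q =
      Q ∪ {x : α | x ∈ C ∧ ∃ C' : Set α, Predecessor φ C' C ∧
        C' \ ⋂₀ {D : Set α | Predecessor φ D C} = {x}} := by
  subst hQC
  change ImpClosure (EBase φ) Q = Q ∪ isolatedPoints φ (φ Q)
  have hbin : binPart φ Q ⊆ Q := hQ.binPart_subset hφ hstd hnji
  apply Subset.antisymm
  · have hclosed : ImpClosedSet (EBase φ) (Q ∪ isolatedPoints φ (φ Q)) :=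
      impClosedSet_eBase_iff.2
        ⟨hQ.binPart_union_isolatedPoints_subset hφ hstd hmod (hfin.subset hφ.subset_closure) hbin,
          fun _ _ => hQ.mem_union_isolatedPoints_of_isEGen hφ hstd hmod hfin hbin⟩
    exact sInter_subset_of_mem ⟨subset_union_left, hclosed⟩
  · refine subset_sInter fun Y ⟨hQY, hY⟩ => union_subset hQY fun x hx => ?_
    by_cases hxQ : x ∈ Q
    · exact hQY hxQ
    obtain ⟨B, hBQ, hB⟩ :=
      hQ.exists_isEGen_of_mem_isolatedPoints hφ hstd hmod hfin hbin hx hxQ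
    exact (impClosedSet_eBase_iff.1 hY).2 x B hB (hBQ.trans hQY)

/-- in a modular closure space, for a non-join-irreducible essential
set `C` and any quasi-closed set `Q` spanning `C`, the closure of `Q` under the
E-base equals `Q ∪ {x ∈ C : C' \ C_* = {x} for some predecessor C' of C}`. -/
theorem statement15 {α : Type*} [Fintype α] (φ : Set α → Set α)
    (hφ : IsClosureOp φ) (hstd : IsStandard φ) (hmod : ModularLattice φ)
    (C : Set α) (hess : Essential φ C) (hnji : ¬ JoinIrredUP φ C)
    (Q : Set α) (hQ : QuasiClosed φ Q) (hQC : φ Q = C) :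
    ImpClosure (EBase φ) Q =
      Q ∪ {x : α | x ∈ C ∧ ∃ C' : Set α, Predecessor φ C' C ∧
        C' \ ⋂₀ {D : Set α | Predecessor φ D C} = {x}} := by
  exact statement15_general hφ hstd hmod C.toFinite hnji hQ hQC

end EBaseFormal
end

section
/- Let (U, φ) be the closure space of a finite simple binary matroid, where φ is the matroid closure operator. Then the canonical (Duquenne–Guigues) base and the E-base of (U, φ) are equal; in particular, the E-base of (U, φ) is valid. -/
/-!
The canonical base and the E-base both consist of the implications `C \ {x} → x`, where `C` runs
over the circuits that are flats and `x` over the elements of `C`. The reason is the binary chord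
property. Let `f` represent the matroid over GF(2). If `f x` is the sum of `f` over `S` and `y` is
any other element spanned by `S`, then `f y` is the sum of `f` over a proper subset `T` of `S`, so
that `f x` is the sum of `f` over `insert y (S \ T)`. Simplicity forces `T` to have at least two
elements, so both of these sums have fewer terms than the one over `S`.

Hence, among the sums of elements of a set `P` whose value lies outside `P`, a shortest one spans
nothing besides its terms and its value. An E-generator has the same property, because the shorter
sum for `x` contains a D-generator of `x` whose closure is strictly smaller, by rank.
-/

namespace EBaseFormal

open Set

variable {α : Type*}

section ClosureSpace

variable {φ : Set α → Set α} {x : α} {A B : Set α}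

theorem IsClosureOp.closure_subset_of_subset (hφ : IsClosureOp φ) (h : A ⊆ φ B) : φ A ⊆ φ B :=
  (hφ.2.2 _ _ h).trans (hφ.2.1 B).subset

theorem IsClosureOp.subset_binPart_s18 (hφ : IsClosureOp φ) (A : Set α) : A ⊆ binPart φ A :=
  fun a ha ↦ mem_biUnion ha (hφ.1 {a} rfl)

theorem IsClosureOp.closure_binPart (hφ : IsClosureOp φ) (A : Set α) : φ (binPart φ A) = φ A := by
  refine (hφ.closure_subset_of_subset ?_).antisymm (hφ.2.2 _ _ (hφ.subset_binPart_s18 A))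
  exact iUnion₂_subset fun a ha ↦ hφ.2.2 _ _ (singleton_subset_iff.2 ha)

theorem binPart_mono (h : A ⊆ B) : binPart φ A ⊆ binPart φ B :=
  biUnion_subset_biUnion_left h

theorem Atomistic.binPart_eq (hatom : Atomistic φ) (A : Set α) : binPart φ A = A := by
  simp only [binPart, hatom _, biUnion_of_singleton]

theorem Atomistic.isDGen_iff (hatom : Atomistic φ) :
    IsDGen φ x A ↔ x ∈ φ A ∧ x ∉ A ∧ ∀ B ⊂ A, x ∉ φ B := by
  simp only [IsDGen, hatom.binPart_eq]

theorem IsDGen.notMem (hφ : IsClosureOp φ) (hA : IsDGen φ x A) : x ∉ A :=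
  fun hx ↦ hA.2.1 (hφ.subset_binPart_s18 A hx)

theorem IsDGen.closure_eq_of_subset (hφ : IsClosureOp φ) (hA : IsDGen φ x A) (hBA : B ⊆ A)
    (hx : x ∈ φ B) : φ B = φ A := by
  have hbin : binPart φ B = binPart φ A :=
    (binPart_mono hBA).eq_of_not_ssubset fun hlt ↦ hA.2.2 B hlt hx
  rw [← hφ.closure_binPart B, hbin, hφ.closure_binPart]

theorem Atomistic.exists_isDGen_subset (hatom : Atomistic φ) {D : Finset α} (hx : x ∈ φ D)
    (hxD : x ∉ D) : ∃ B ⊆ D, IsDGen φ x B := by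
  obtain ⟨B, hBD, hB⟩ := exists_minimal_le_of_wellFoundedLT (fun B : Finset α ↦ x ∈ φ B) D hx
  refine ⟨B, hBD, hatom.isDGen_iff.2 ⟨hB.prop, fun h ↦ hxD (hBD h), fun E hE hxE ↦ ?_⟩⟩
  lift E to Finset α using B.finite_toSet.subset hE.subset
  exact hE.not_subset (Finset.coe_subset.2 (hB.le_of_le hxE (Finset.coe_subset.1 hE.subset)))

/-- `A` is a tight D-generator of `x`: a D-generator of `x` whose closure has no element outside
`A` other than `x`. In a simple matroid this says that `A ∪ {x}` is both a circuit and a flat, and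
that `x ∉ A`. -/
def IsTightDGen (φ : Set α → Set α) (x : α) (A : Set α) : Prop :=
  IsDGen φ x A ∧ φ A = insert x A

theorem IsTightDGen.closure_diff_self (hφ : IsClosureOp φ) (h : IsTightDGen φ x A) :
    φ A \ A = {x} := by
  rw [h.2, insert_sdiff_eq_singleton (h.1.notMem hφ)]

theorem IsTightDGen.isEGen (hφ : IsClosureOp φ) (h : IsTightDGen φ x A) : IsEGen φ x A := by
  refine ⟨h.1, fun B hB hBA ↦ h.1.closure_eq_of_subset hφ ?_ hB.1⟩
  have hBx : B ⊆ insert x A := h.2 ▸ (hφ.1 B).trans hBA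
  exact (subset_insert_iff_of_notMem (hB.notMem hφ)).1 hBx

theorem IsTightDGen.quasiClosed (hφ : IsClosureOp φ) (h : IsTightDGen φ x A) :
    QuasiClosed φ A := by
  intro X hXA hlt
  have hxX : x ∉ φ X := fun hx ↦ hlt.ne (h.1.closure_eq_of_subset hφ hXA hx)
  exact (subset_insert_iff_of_notMem hxX).1 (h.2 ▸ hlt.subset)

theorem IsTightDGen.pseudoClosed (hφ : IsClosureOp φ) (hatom : Atomistic φ)
    (h : IsTightDGen φ x A) : PseudoClosed φ A := by
  refine ⟨fun hcl ↦ h.1.notMem hφ (hcl.subset h.1.1), h.quasiClosed hφ, fun Q _ hQ hQA ↦ ?_⟩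
  have hxQ : x ∈ φ Q := hQ ▸ h.1.1
  exact hQA.eq_of_not_ssubset fun hlt ↦ (hatom.isDGen_iff.1 h.1).2.2 Q hlt hxQ

/-- `φ` has enough tight D-generators: every set that is not closed contains a tight D-generator of
an element outside it. Together with the tightness of all E-generators, this property makes the two
bases coincide. -/
def HasEnoughTightDGens (φ : Set α → Set α) : Prop :=
  ∀ P : Set α, ¬ IsClosedSet φ P → ∃ A ⊆ P, ∃ x ∉ P, IsTightDGen φ x A

theorem HasEnoughTightDGens.exists_isTightDGen_of_pseudoClosed (hφ : IsClosureOp φ)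
    (htight : HasEnoughTightDGens φ) {P : Set α} (hP : PseudoClosed φ P) :
    ∃ x, IsTightDGen φ x P := by
  obtain ⟨hopen, hquasi, hmin⟩ := hP
  obtain ⟨A, hAP, x, hxP, hA⟩ := htight P hopen
  have hspan : φ A = φ P :=
    (hφ.2.2 _ _ hAP).eq_of_not_ssubset fun hlt ↦ hxP (hquasi A hAP hlt hA.1.1)
  exact ⟨x, hmin A (hA.quasiClosed hφ) hspan hAP ▸ hA⟩

theorem HasEnoughTightDGens.dgBase_subset_eBase (hφ : IsClosureOp φ)
    (htight : HasEnoughTightDGens φ) : DGBase φ ⊆ EBase φ := by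
  rintro _ ⟨P, hP, rfl⟩
  obtain ⟨x, hx⟩ := htight.exists_isTightDGen_of_pseudoClosed hφ hP
  exact Or.inr ⟨x, P, by rw [hx.closure_diff_self hφ], hx.isEGen hφ⟩

theorem eBase_subset_dgBase (hφ : IsClosureOp φ) (hatom : Atomistic φ)
    (htight : ∀ x A, IsEGen φ x A → IsTightDGen φ x A) : EBase φ ⊆ DGBase φ := by
  rintro _ (⟨a, x, -, hx, hne⟩ | ⟨x, A, rfl, hA⟩)
  · exact absurd ((hatom a).subset hx) hne
  · have hA := htight x A hA
    exact ⟨A, hA.pseudoClosed hφ hatom, by rw [hA.closure_diff_self hφ]⟩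

theorem IsClosureOp.impClosedSet_eBase (hφ : IsClosureOp φ) (Z : Set α) :
    ImpClosedSet (EBase φ) (φ Z) := by
  rintro _ (⟨a, x, rfl, hx, -⟩ | ⟨x, A, rfl, hA⟩) hsub
  · exact singleton_subset_iff.2 (hφ.closure_subset_of_subset hsub hx)
  · exact singleton_subset_iff.2 (hφ.closure_subset_of_subset hsub hA.1.1)

theorem HasEnoughTightDGens.isClosedSet_of_impClosedSet (hφ : IsClosureOp φ)
    (htight : HasEnoughTightDGens φ) {Y : Set α} (hY : ImpClosedSet (EBase φ) Y) :
    IsClosedSet φ Y := by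
  by_contra hopen
  obtain ⟨A, hAY, x, hxY, hA⟩ := htight Y hopen
  exact hxY (hY (A, {x}) (Or.inr ⟨x, A, rfl, hA.isEGen hφ⟩) hAY rfl)

theorem HasEnoughTightDGens.eBaseValid (hφ : IsClosureOp φ) (htight : HasEnoughTightDGens φ) :
    EBaseValid φ := by
  intro Z
  refine Subset.antisymm (sInter_subset_of_mem ⟨hφ.1 Z, hφ.impClosedSet_eBase Z⟩) ?_
  rintro x hx Y ⟨hZY, hY⟩
  exact (htight.isClosedSet_of_impClosedSet hφ hY).subset (hφ.2.2 _ _ hZY hx)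

end ClosureSpace

section Span

variable {K V : Type*} [Semiring K] [AddCommMonoid V] [Module K V]

variable (K) in
/-- The closure operator of the matroid represented by the family of vectors `f`. The index type
and the space may be infinite, so this also covers finitary matroids of infinite rank. -/
def spanClosure (f : α → V) (X : Set α) : Set α :=
  {y | f y ∈ Submodule.span K (f '' X)}

variable {f : α → V}

theorem isClosureOp_spanClosure : IsClosureOp (spanClosure K f) := by
  have hsub (X : Set α) : X ⊆ spanClosure K f X :=
    fun x hx ↦ Submodule.subset_span (mem_image_of_mem f hx)
  have hmono (X Y : Set α) (h : X ⊆ Y) : spanClosure K f X ⊆ spanClosure K f Y :=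
    fun _ hx ↦ Submodule.span_mono (image_mono h) hx
  have hidem (X : Set α) : spanClosure K f (spanClosure K f X) ⊆ spanClosure K f X :=
    fun _ hx ↦ Submodule.span_le.2 (image_subset_iff.2 subset_rfl) hx
  exact ⟨hsub, fun X ↦ (hidem X).antisymm (hsub _), hmono⟩

theorem injective_of_atomistic_spanClosure (hatom : Atomistic (spanClosure K f)) :
    Function.Injective f := by
  intro x y hxy
  have hx : x ∈ spanClosure K f {y} := Submodule.subset_span ⟨y, rfl, hxy.symm⟩
  exact (hatom y).subset hx

theorem ne_zero_of_spanClosure_empty (hempty : spanClosure K f ∅ = ∅) (x : α) : f x ≠ 0 := by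
  intro hx
  have hmem : f x ∈ Submodule.span K (f '' ∅) := hx ▸ Submodule.zero_mem _
  exact hempty.subset hmem

theorem card_le_card_of_subset_spanClosure [StrongRankCondition K] {S D : Finset α}
    (hS : LinearIndepOn K f (S : Set α)) (hSD : (S : Set α) ⊆ spanClosure K f D) :
    S.card ≤ D.card := by
  classical
  have hspan : range (fun s : (S : Set α) ↦ f s) ≤ Submodule.span K (D.image f : Set V) := by
    rintro _ ⟨s, rfl⟩
    rw [Finset.coe_image]
    exact hSD s.2
  have hle := linearIndependent_le_span' _ hS _ hspan
  simp only [Cardinal.mk_coe_finset, Fintype.card_coe, Nat.cast_le, Finset.coe_sort_coe] at hle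
  exact hle.trans Finset.card_image_le

end Span

theorem IsDGen.linearIndepOn {K V : Type*} [DivisionRing K] [AddCommGroup V] [Module K V]
    {f : α → V} {x : α} {A : Set α} (hatom : Atomistic (spanClosure K f))
    (hA : IsDGen (spanClosure K f) x A) : LinearIndepOn K f A := by
  have hφ : IsClosureOp (spanClosure K f) := isClosureOp_spanClosure
  rw [linearIndepOn_iff_notMem_span]
  intro a ha hdep
  have hspan : A ⊆ spanClosure K f (A \ {a}) := by
    intro b hb
    obtain rfl | hba := eq_or_ne b a
    exacts [hdep, hφ.1 _ ⟨hb, hba⟩]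
  exact (hatom.isDGen_iff.1 hA).2.2 _ (sdiff_singleton_ssubset.2 ha)
    (hφ.closure_subset_of_subset hspan hA.1)

theorem one_lt_card_of_sum_eq {M : Type*} [AddCommMonoid M] {f : α → M}
    (hinj : Function.Injective f) {T : Finset α} {y : α} (hT : ∑ t ∈ T, f t = f y)
    (hy : f y ≠ 0) (hyT : y ∉ T) : 1 < T.card := by
  by_contra! hcard
  obtain hzero | hone := Nat.le_one_iff_eq_zero_or_eq_one.1 hcard
  · rw [Finset.card_eq_zero.1 hzero, Finset.sum_empty] at hT
    exact hy hT.symm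
  · obtain ⟨t, rfl⟩ := Finset.card_eq_one.1 hone
    rw [Finset.sum_singleton] at hT
    exact hyT (Finset.mem_singleton.2 (hinj hT).symm)

section Binary

variable {V : Type*} [AddCommGroup V] [Module (ZMod 2) V] {f : α → V} {x y : α}

theorem mem_spanClosure_zmod_two {X : Set α} :
    y ∈ spanClosure (ZMod 2) f X ↔ ∃ T : Finset α, (T : Set α) ⊆ X ∧ ∑ t ∈ T, f t = f y := by
  refine ⟨fun hy ↦ ?_, ?_⟩
  · obtain ⟨l, hl, hly⟩ := (Finsupp.mem_span_image_iff_linearCombination _).1 hy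
    refine ⟨l.support, hl, hly ▸ Finset.sum_congr rfl fun t ht ↦ ?_⟩
    have hlt : l t = 1 := Fin.eq_one_of_ne_zero (l t) (Finsupp.mem_support_iff.1 ht)
    simp [hlt]
  · rintro ⟨T, hT, hTy⟩
    change f y ∈ Submodule.span (ZMod 2) (f '' X)
    rw [← hTy]
    exact Submodule.sum_mem _ fun t ht ↦ Submodule.subset_span (mem_image_of_mem f (hT ht))

theorem IsDGen.exists_finset_sum_eq (hatom : Atomistic (spanClosure (ZMod 2) f)) {A : Set α}
    (hA : IsDGen (spanClosure (ZMod 2) f) x A) :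
    ∃ S : Finset α, (S : Set α) = A ∧ ∑ s ∈ S, f s = f x := by
  obtain ⟨hx, -, hmin⟩ := hatom.isDGen_iff.1 hA
  obtain ⟨S, hSA, hS⟩ := mem_spanClosure_zmod_two.1 hx
  exact ⟨S, hSA.eq_of_not_ssubset fun hlt ↦
    hmin S hlt (mem_spanClosure_zmod_two.2 ⟨S, subset_rfl, hS⟩), hS⟩

theorem exists_chord [DecidableEq α] (hinj : Function.Injective f) {S : Finset α}
    (hS : ∑ s ∈ S, f s = f x) (hyspan : y ∈ spanClosure (ZMod 2) f S) (hy : f y ≠ 0) (hyS : y ∉ S)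
    (hyx : y ≠ x) :
    ∃ T ⊂ S, ∑ t ∈ T, f t = f y ∧ ∑ t ∈ insert y (S \ T), f t = f x ∧
      (insert y (S \ T)).card < S.card := by
  obtain ⟨T, hTS, hT⟩ := mem_spanClosure_zmod_two.1 hyspan
  have hTS : T ⊆ S := Finset.coe_subset.1 hTS
  have hTne : T ≠ S := by
    rintro rfl
    exact hyx (hinj (hT.symm.trans hS))
  have hyST : y ∉ S \ T := fun h ↦ hyS (Finset.sdiff_subset h)
  refine ⟨T, hTS.ssubset_of_ne hTne, hT, ?_, ?_⟩
  · rw [Finset.sum_insert hyST, ← hT, add_comm, Finset.sum_sdiff hTS, hS]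
  · have hTcard := one_lt_card_of_sum_eq hinj hT hy fun h ↦ hyS (hTS h)
    have hsplit := Finset.card_sdiff_add_card_eq_card hTS
    rw [Finset.card_insert_of_notMem hyST]
    omega

theorem isTightDGen_of_sum_minimal (hempty : spanClosure (ZMod 2) f ∅ = ∅)
    (hatom : Atomistic (spanClosure (ZMod 2) f)) {P : Set α} {S : Finset α} (hSP : (S : Set α) ⊆ P)
    (hxP : x ∉ P) (hS : ∑ s ∈ S, f s = f x)
    (hmin : ∀ T : Finset α, (T : Set α) ⊆ P → T.card < S.card →
      ∀ z, ∑ t ∈ T, f t = f z → z ∈ P) :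
    IsTightDGen (spanClosure (ZMod 2) f) x S := by
  classical
  have hφ : IsClosureOp (spanClosure (ZMod 2) f) := isClosureOp_spanClosure
  have hxS : x ∈ spanClosure (ZMod 2) f S := mem_spanClosure_zmod_two.2 ⟨S, subset_rfl, hS⟩
  have hgen : IsDGen (spanClosure (ZMod 2) f) x S := by
    refine hatom.isDGen_iff.2 ⟨hxS, fun h ↦ hxP (hSP h), fun B hB hx ↦ ?_⟩
    obtain ⟨T, hTB, hT⟩ := mem_spanClosure_zmod_two.1 hx
    have hTS : T ⊂ S := Finset.coe_ssubset.1 (hTB.trans_ssubset hB)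
    exact hxP (hmin T (hTB.trans (hB.subset.trans hSP)) (Finset.card_lt_card hTS) x hT)
  refine ⟨hgen, Subset.antisymm (fun y hy ↦ ?_) (insert_subset hxS (hφ.1 _))⟩
  by_contra hyxS
  obtain ⟨hyx, hyS⟩ := not_or.1 hyxS
  obtain ⟨T, hTS, hT, hTx, hcard⟩ := exists_chord (injective_of_atomistic_spanClosure hatom)
    hS hy (ne_zero_of_spanClosure_empty hempty y) hyS hyx
  have hyP : y ∈ P :=
    hmin T ((Finset.coe_subset.2 hTS.subset).trans hSP) (Finset.card_lt_card hTS) y hT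
  have hchordP : ((insert y (S \ T) : Finset α) : Set α) ⊆ P := by
    rw [Finset.coe_insert, Finset.coe_sdiff]
    exact insert_subset hyP (sdiff_subset.trans hSP)
  exact hxP (hmin _ hchordP hcard x hTx)

theorem hasEnoughTightDGens_spanClosure (hempty : spanClosure (ZMod 2) f ∅ = ∅)
    (hatom : Atomistic (spanClosure (ZMod 2) f)) :
    HasEnoughTightDGens (spanClosure (ZMod 2) f) := by
  intro P hP
  obtain ⟨x₀, hx₀, hx₀P⟩ := not_subset.1 fun h ↦ hP (h.antisymm (isClosureOp_spanClosure.1 P))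
  obtain ⟨S₀, hS₀P, hS₀⟩ := mem_spanClosure_zmod_two.1 hx₀
  obtain ⟨S, ⟨hSP, x, hxP, hS⟩, hmin⟩ := exists_minimalFor_of_wellFoundedLT
    (fun S : Finset α ↦ (S : Set α) ⊆ P ∧ ∃ x ∉ P, ∑ s ∈ S, f s = f x) Finset.card
    ⟨S₀, hS₀P, x₀, hx₀P, hS₀⟩
  refine ⟨S, hSP, x, hxP, isTightDGen_of_sum_minimal hempty hatom hSP hxP hS ?_⟩
  intro T hTP hcard z hT
  by_contra hzP
  exact hcard.not_ge (hmin ⟨hTP, z, hzP, hT⟩ hcard.le)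

theorem IsEGen.isTightDGen (hempty : spanClosure (ZMod 2) f ∅ = ∅)
    (hatom : Atomistic (spanClosure (ZMod 2) f)) {A : Set α}
    (hA : IsEGen (spanClosure (ZMod 2) f) x A) : IsTightDGen (spanClosure (ZMod 2) f) x A := by
  classical
  have hφ : IsClosureOp (spanClosure (ZMod 2) f) := isClosureOp_spanClosure
  obtain ⟨hgen, hmin⟩ := hA
  obtain ⟨S, rfl, hS⟩ := hgen.exists_finset_sum_eq hatom
  refine ⟨hgen, Subset.antisymm (fun y hy ↦ ?_) (insert_subset hgen.1 (hφ.1 _))⟩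
  by_contra hyxS
  obtain ⟨hyx, hyS⟩ := not_or.1 hyxS
  obtain ⟨T, -, -, hTx, hcard⟩ := exists_chord (injective_of_atomistic_spanClosure hatom)
    hS hy (ne_zero_of_spanClosure_empty hempty y) hyS hyx
  set D := insert y (S \ T) with hD
  have hxD : x ∉ D := by
    rw [hD, Finset.mem_insert, not_or]
    exact ⟨Ne.symm hyx, fun h ↦ hgen.notMem hφ (Finset.sdiff_subset h)⟩
  have hDS : (D : Set α) ⊆ spanClosure (ZMod 2) f S := by
    rw [hD, Finset.coe_insert, Finset.coe_sdiff]
    exact insert_subset hy (sdiff_subset.trans (hφ.1 _))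
  obtain ⟨B, hBD, hB⟩ := hatom.exists_isDGen_subset
    (mem_spanClosure_zmod_two.2 ⟨D, subset_rfl, hTx⟩) hxD
  have hBD : (B : Set α) ⊆ D := Finset.coe_subset.2 hBD
  have hBS : spanClosure (ZMod 2) f B = spanClosure (ZMod 2) f S :=
    hmin B hB (hφ.closure_subset_of_subset (hBD.trans hDS))
  have hSD : (S : Set α) ⊆ spanClosure (ZMod 2) f D :=
    (hφ.1 S).trans (hBS ▸ hφ.2.2 _ _ hBD)
  exact hcard.not_ge (card_le_card_of_subset_spanClosure (hgen.linearIndepOn hatom) hSD)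

end Binary

theorem statement18_general {V : Type*} [AddCommGroup V] [Module (ZMod 2) V] (f : α → V)
    (hempty : spanClosure (ZMod 2) f ∅ = ∅) (hatom : Atomistic (spanClosure (ZMod 2) f)) :
    DGBase (spanClosure (ZMod 2) f) = EBase (spanClosure (ZMod 2) f) ∧
      EBaseValid (spanClosure (ZMod 2) f) := by
  have hφ : IsClosureOp (spanClosure (ZMod 2) f) := isClosureOp_spanClosure
  have htight := hasEnoughTightDGens_spanClosure hempty hatom
  exact ⟨(htight.dgBase_subset_eBase hφ).antisymm
    (eBase_subset_dgBase hφ hatom fun _ _ hA ↦ hA.isTightDGen hempty hatom), htight.eBaseValid hφ⟩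

/-- for the closure space of a finite simple binary matroid, the
canonical base and the E-base coincide; in particular the E-base is valid. -/
theorem statement18 {α : Type*} [Fintype α] (φ : Set α → Set α)
    (hφ : IsClosureOp φ)
    (hexch : ∀ C : Set α, IsClosedSet φ C → ∀ x y : α, x ∉ C → y ∉ C →
      x ∈ φ (C ∪ {y}) → y ∈ φ (C ∪ {x}))
    (hsimple : φ ∅ = (∅ : Set α) ∧ ∀ x : α, φ {x} = ({x} : Set α))
    (hbinary : ∃ (n : ℕ) (f : α → (Fin n → ZMod 2)),
      ∀ X : Set α, φ X = {y : α | f y ∈ Submodule.span (ZMod 2) (f '' X)}) :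
    DGBase φ = EBase φ ∧ EBaseValid φ := by
  obtain ⟨n, f, hf⟩ := hbinary
  obtain rfl : φ = spanClosure (ZMod 2) f := funext hf
  exact statement18_general f hsimple.1 hsimple.2

end EBaseFormal
end
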